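/- One-dimensional early-time Duhamel estimate: fix 2 < r ≤ ∞. For any t > 0, any measurable interval I ⊆ [0, t/2], and any measurable u : I × ℝ → ℂ, one has ‖ ∫_I e^{i(t−s)Δ} (|u|⁴u)(s) ds ‖_{L^r_x(ℝ)} ≤ C t^{−(1/2−1/r)} ( sup_{s ∈ I} s^{1/2−1/r} ‖u(s)‖_{L^r_x(ℝ)} ) ‖u‖⁴_{L^{8r/(r+2),4}_s L^{4r/(r−2)}_x(I×ℝ)}, with C depending only on r. -/

import Mathlib

open MeasureTheory Set
open scoped ENNReal Real

noncomputable section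

/-- The free Schrödinger propagator `e^{itΔ}` acting on functions on a `d`-dimensional space:
for `t ≠ 0`, `(e^{itΔ}f)(x) = (4πit)^{-d/2} ∫ e^{i|x-y|²/(4t)} f(y) dy`, and `e^{i0Δ}f = f`. -/
def schrod {E : Type*} [NormedAddCommGroup E] [MeasureSpace E] (d : ℕ) (t : ℝ) (f : E → ℂ) :
    E → ℂ :=
  if t = 0 then f
  else fun x =>
    (4 * (Real.pi : ℂ) * Complex.I * (t : ℂ)) ^ (-(d : ℂ) / 2) *
      ∫ y, Complex.exp (Complex.I * ((‖x - y‖ ^ 2 : ℝ) : ℂ) / (4 * (t : ℂ))) * f y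

/-- Mixed Lebesgue norm `‖u‖_{L^p_t L^q_x (I × space)}`. -/
def mixedNorm {α : Type*} [MeasurableSpace α] (ν : Measure α) (I : Set ℝ) (p q : ℝ≥0∞)
    (u : ℝ → α → ℂ) : ℝ≥0∞ :=
  if p = ∞ then essSup (fun t => eLpNorm (u t) q ν) (volume.restrict I)
  else (∫⁻ t in I, eLpNorm (u t) q ν ^ p.toReal) ^ (1 / p.toReal)

/-- Lorentz quasinorm `p^{1/q} ‖ λ · ν({g > λ})^{1/p} ‖_{L^q((0,∞), dλ/λ)}`
for an `ℝ≥0∞`-valued function `g`. -/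
def lorentzNorm {α : Type*} [MeasurableSpace α] (ν : Measure α) (p q : ℝ≥0∞)
    (g : α → ℝ≥0∞) : ℝ≥0∞ :=
  if q = ∞ then
    ⨆ l ∈ Set.Ioi (0 : ℝ), ENNReal.ofReal l * ν {x | ENNReal.ofReal l < g x} ^ p⁻¹.toReal
  else
    (p * ∫⁻ l in Set.Ioi (0 : ℝ),
        (ENNReal.ofReal l * ν {x | ENNReal.ofReal l < g x} ^ p⁻¹.toReal) ^ q.toReal /
          ENNReal.ofReal l) ^ q⁻¹.toReal

/-- Lorentz quasinorm `‖f‖_{L^{p,q}}` of a scalar function. -/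
def lorentzNormC {α : Type*} [MeasurableSpace α] (ν : Measure α) (p q : ℝ≥0∞)
    (f : α → ℂ) : ℝ≥0∞ :=
  lorentzNorm ν p q fun x => (‖f x‖₊ : ℝ≥0∞)

/-- Lorentz-in-time mixed norm `‖u‖_{L^{p,q}_t L^r_x (I × space)}`. -/
def lorentzMixedNorm {α : Type*} [MeasurableSpace α] (ν : Measure α) (I : Set ℝ)
    (p q r : ℝ≥0∞) (u : ℝ → α → ℂ) : ℝ≥0∞ :=
  lorentzNorm (volume.restrict I) p q fun t => eLpNorm (u t) r ν

/-- The nonlinearity `|f|^a f`. -/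
def nonlin {E : Type*} (a : ℝ) (f : E → ℂ) : E → ℂ := fun x => ((‖f x‖ ^ a : ℝ) : ℂ) * f x

/-! Completing the square turns `e^{iTΔ}` into a Fourier transform between two unimodular Gaussian
factors, so the `L^{r'} → L^r` dispersive bound is the Hausdorff–Young inequality, which follows by
real interpolation from `L¹ → L^∞` and Plancherel. By Hölder, `‖|u|^a u‖_{r'} ≤ ‖u‖_q^a ‖u‖_r`, and
since `t - s` is comparable to `t` for `s ≤ t / 2`, Minkowski's inequality reduces the estimate to
`∫_I s^{-γ} ‖u(s)‖_q^a ds ≤ ‖u‖^a_{L^{p,a}_s L^q_x}` with `a / p = 1 - γ`. The layer-cake formula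
writes the left side as an integral of `s^{-γ}` over the superlevel sets of `s ↦ ‖u(s)‖_q`. Among
sets of measure `m` that integral is largest on `[0, m]`, where it equals `m^{1-γ} / (1 - γ)`; this
is exactly the integrand of the Lorentz quasinorm. -/

theorem lintegral_Ioi_ofReal_rpow_eq_top (p : ℝ) :
    ∫⁻ l in Ioi (0 : ℝ), ENNReal.ofReal (l ^ p) = ∞ := by
  by_contra h
  refine not_integrableOn_Ioi_rpow p ⟨by fun_prop, ?_⟩
  refine (hasFiniteIntegral_iff_ofReal ?_).2 (lt_top_iff_ne_top.2 h)
  filter_upwards [ae_restrict_mem measurableSet_Ioi] with l hl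
  exact Real.rpow_nonneg (le_of_lt hl) p

theorem lintegral_Ioc_ofReal_rpow {p b : ℝ} (hp : -1 < p) (hb : 0 ≤ b) :
    ∫⁻ l in Ioc 0 b, ENNReal.ofReal (l ^ p) = ENNReal.ofReal (b ^ (p + 1) / (p + 1)) := by
  have hint : IntervalIntegrable (fun l : ℝ => l ^ p) volume 0 b :=
    intervalIntegral.intervalIntegrable_rpow' hp
  rw [← ofReal_integral_eq_lintegral_ofReal hint.1, ← intervalIntegral.integral_of_le hb,
    integral_rpow (Or.inl hp), Real.zero_rpow (by linarith), sub_zero]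
  filter_upwards [ae_restrict_mem measurableSet_Ioc] with l hl
  exact Real.rpow_nonneg hl.1.le p

section LayerCake

variable {α : Type*} [MeasurableSpace α] {μ : Measure α}

theorem lintegral_rpow_eq_lintegral_meas_ofReal_lt_mul {M : α → ℝ≥0∞} (hM : AEMeasurable M μ)
    {p : ℝ} (hp : 0 < p) :
    ∫⁻ x, M x ^ p ∂μ =
      ENNReal.ofReal p *
        ∫⁻ l in Ioi (0 : ℝ), μ {x | ENNReal.ofReal l < M x} * ENNReal.ofReal (l ^ (p - 1)) := by
  by_cases hfin : μ {x | M x = ∞} = 0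
  · have hfin' : ∀ᵐ x ∂μ, M x ≠ ∞ := by simpa only [ae_iff, not_not] using hfin
    have hset (l : ℝ) (hl : l ∈ Ioi (0 : ℝ)) :
        μ {x | l < (M x).toReal} = μ {x | ENNReal.ofReal l < M x} := by
      refine measure_congr ?_
      filter_upwards [hfin'] with x hx
      exact propext (ENNReal.ofReal_lt_iff_lt_toReal (le_of_lt hl) hx).symm
    calc ∫⁻ x, M x ^ p ∂μ = ∫⁻ x, ENNReal.ofReal ((M x).toReal ^ p) ∂μ := by
          refine lintegral_congr_ae ?_
          filter_upwards [hfin'] with x hx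
          rw [← ENNReal.ofReal_rpow_of_nonneg ENNReal.toReal_nonneg hp.le, ENNReal.ofReal_toReal hx]
      _ = _ := lintegral_rpow_eq_lintegral_meas_lt_mul μ
          (Filter.Eventually.of_forall fun _ => ENNReal.toReal_nonneg) hM.ennreal_toReal hp
      _ = _ := by
          congr 1
          exact setLIntegral_congr_fun measurableSet_Ioi fun l hl => by simp only [hset l hl]
  · have hleft : ∫⁻ x, M x ^ p ∂μ = ∞ := by
      refine lintegral_eq_top_of_measure_eq_top_ne_zero (hM.pow_const p) ?_
      simpa only [ENNReal.rpow_eq_top_iff_of_pos hp] using hfin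
    have hright : ∫⁻ l in Ioi (0 : ℝ),
        μ {x | ENNReal.ofReal l < M x} * ENNReal.ofReal (l ^ (p - 1)) = ∞ := by
      refine top_le_iff.1 ?_
      calc ∞ = ∫⁻ l in Ioi (0 : ℝ), μ {x | M x = ∞} * ENNReal.ofReal (l ^ (p - 1)) := by
            rw [lintegral_const_mul _ (by fun_prop), lintegral_Ioi_ofReal_rpow_eq_top,
              ENNReal.mul_top hfin]
        _ ≤ _ := by
            refine lintegral_mono fun l => mul_le_mul_left (measure_mono ?_) _
            intro x (hx : M x = ∞)
            exact ENNReal.ofReal_lt_top.trans_eq hx.symm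
    rw [hleft, hright, ENNReal.mul_top (by simpa using hp)]

theorem lintegral_mul_rpow_eq_lintegral_setLIntegral {w M : α → ℝ≥0∞} (hw : AEMeasurable w μ)
    (hM : Measurable M) {p : ℝ} (hp : 0 < p) :
    ∫⁻ x, w x * M x ^ p ∂μ =
      ENNReal.ofReal p *
        ∫⁻ l in Ioi (0 : ℝ),
          (∫⁻ x in {x | ENNReal.ofReal l < M x}, w x ∂μ) * ENNReal.ofReal (l ^ (p - 1)) := by
  have h := lintegral_rpow_eq_lintegral_meas_ofReal_lt_mul (μ := μ.withDensity w) hM.aemeasurable hp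
  rw [lintegral_withDensity_eq_lintegral_mul₀ hw (hM.pow_const p).aemeasurable] at h
  simpa only [Pi.mul_apply, withDensity_apply _ (measurableSet_lt measurable_const hM)] using h

end LayerCake

section Rearrangement

theorem setLIntegral_le_setLIntegral_Ioc {f : ℝ → ℝ≥0∞} (hf : AntitoneOn f (Ioi 0)) {E : Set ℝ}
    (hE : MeasurableSet E) (hE0 : E ⊆ Ioi 0) {m : ℝ} (hm : volume E = ENNReal.ofReal m) :
    ∫⁻ s in E, f s ≤ ∫⁻ s in Ioc 0 m, f s := by
  have hJ : MeasurableSet (Ioc 0 m) := measurableSet_Ioc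
  have hvol : volume (E \ Ioc 0 m) = volume (Ioc 0 m \ E) :=
    measure_sdiff_symm hE.nullMeasurableSet hJ.nullMeasurableSet (by simp [hm])
      (measure_ne_top_of_subset inter_subset_left (by simp [hm]))
  have hout : ∫⁻ s in E \ Ioc 0 m, f s ≤ ∫⁻ s in Ioc 0 m \ E, f s := by
    rcases le_or_gt m 0 with hm0 | hm0
    · refine (setLIntegral_measure_zero _ _ ?_).trans_le zero_le
      rw [hvol, Ioc_eq_empty hm0.not_gt, empty_sdiff, measure_empty]
    calc ∫⁻ s in E \ Ioc 0 m, f s ≤ ∫⁻ _ in E \ Ioc 0 m, f m :=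
          setLIntegral_mono' (hE.diff hJ) fun s hs =>
            hf hm0 (hE0 hs.1) (le_of_not_ge fun h => hs.2 ⟨hE0 hs.1, h⟩)
      _ = ∫⁻ _ in Ioc 0 m \ E, f m := by simp only [setLIntegral_const, hvol]
      _ ≤ ∫⁻ s in Ioc 0 m \ E, f s :=
          setLIntegral_mono' (hJ.diff hE) fun s hs => hf hs.1.1 hm0 hs.1.2
  rw [← lintegral_inter_add_sdiff f E hJ, ← lintegral_inter_add_sdiff f (Ioc 0 m) hE,
    inter_comm (Ioc 0 m) E]
  exact add_le_add_right hout _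

theorem setLIntegral_ofReal_rpow_neg_le {E : Set ℝ} (hE : MeasurableSet E) (hE0 : E ⊆ Ici 0)
    {γ : ℝ} (hγ0 : 0 ≤ γ) (hγ1 : γ < 1) :
    ∫⁻ s in E, ENNReal.ofReal (s ^ (-γ)) ≤
      ENNReal.ofReal (1 - γ)⁻¹ * volume E ^ (1 - γ) := by
  have hγ : 0 < 1 - γ := by linarith
  have hpos : (E ∩ Ioi 0 : Set ℝ) =ᵐ[volume] E := by
    simpa only [inter_eq_left.2 hE0] using
      ae_eq_set_inter (ae_eq_refl E) (Ioi_ae_eq_Ici (μ := volume) (a := (0 : ℝ)))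
  rw [← setLIntegral_congr hpos, ← measure_congr hpos]
  by_cases hfin : volume (E ∩ Ioi 0) = ∞
  · rw [hfin, ENNReal.top_rpow_of_pos hγ, ENNReal.mul_top (by simpa using hγ)]
    exact le_top
  have hanti : AntitoneOn (fun s : ℝ => ENNReal.ofReal (s ^ (-γ))) (Ioi 0) := fun s hs t _ hst =>
    ENNReal.ofReal_le_ofReal (Real.rpow_le_rpow_of_nonpos hs hst (by linarith))
  refine (setLIntegral_le_setLIntegral_Ioc hanti (hE.inter measurableSet_Ioi) inter_subset_right
    (ENNReal.ofReal_toReal hfin).symm).trans ?_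
  rw [lintegral_Ioc_ofReal_rpow (by linarith) ENNReal.toReal_nonneg, neg_add_eq_sub, div_eq_inv_mul,
    ENNReal.ofReal_mul (by positivity),
    ← ENNReal.ofReal_rpow_of_nonneg ENNReal.toReal_nonneg hγ.le, ENNReal.ofReal_toReal hfin]

end Rearrangement

section Lorentz

theorem lorentzNorm_rpow {α : Type*} [MeasurableSpace α] (μ : Measure α) (p : ℝ≥0∞) {q : ℝ}
    (hq : 0 < q) (g : α → ℝ≥0∞) :
    lorentzNorm μ p (ENNReal.ofReal q) g ^ q =
      p * ∫⁻ l in Ioi (0 : ℝ),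
        μ {x | ENNReal.ofReal l < g x} ^ (q * p⁻¹.toReal) * ENNReal.ofReal (l ^ (q - 1)) := by
  have hq' : (ENNReal.ofReal q)⁻¹.toReal * q = 1 := by
    rw [ENNReal.toReal_inv, ENNReal.toReal_ofReal hq.le, inv_mul_cancel₀ hq.ne']
  rw [lorentzNorm, if_neg ENNReal.ofReal_ne_top, ← ENNReal.rpow_mul, hq', ENNReal.rpow_one]
  congr 1
  refine setLIntegral_congr_fun measurableSet_Ioi fun l (hl : 0 < l) => ?_
  have hpow : ENNReal.ofReal (l ^ (q - 1)) = ENNReal.ofReal l ^ q / ENNReal.ofReal l := by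
    rw [Real.rpow_sub_one hl.ne', ENNReal.ofReal_div_of_pos hl, ENNReal.ofReal_rpow_of_pos hl]
  simp only [ENNReal.toReal_ofReal hq.le, ENNReal.mul_rpow_of_nonneg _ _ hq.le,
    ← ENNReal.rpow_mul, mul_comm p⁻¹.toReal, hpow, div_eq_mul_inv]
  ring

theorem setLIntegral_rpow_neg_mul_le_lorentzNorm_rpow {I : Set ℝ} (hI : MeasurableSet I)
    (hI0 : I ⊆ Ici 0) {g : ℝ → ℝ≥0∞} (hg : Measurable g) {γ q : ℝ} {p : ℝ≥0∞} (hγ0 : 0 ≤ γ)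
    (hγ1 : γ < 1) (hq : 0 < q) (hp : q * p⁻¹.toReal = 1 - γ) :
    ∫⁻ s in I, ENNReal.ofReal (s ^ (-γ)) * g s ^ q ≤
      lorentzNorm (volume.restrict I) p (ENNReal.ofReal q) g ^ q := by
  have hγ : 0 < 1 - γ := by linarith
  have hp' : p = ENNReal.ofReal q * ENNReal.ofReal (1 - γ)⁻¹ := by
    have hpos : 0 < p⁻¹.toReal := pos_of_mul_pos_right (hp ▸ hγ) hq.le
    rw [← hp, ← ENNReal.ofReal_mul hq.le, mul_inv, mul_inv_cancel_left₀ hq.ne',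
      ENNReal.ofReal_inv_of_pos hpos, ENNReal.ofReal_toReal (ENNReal.toReal_ne_zero.1 hpos.ne').2,
      inv_inv]
  rw [lintegral_mul_rpow_eq_lintegral_setLIntegral (by fun_prop) hg hq, lorentzNorm_rpow _ _ hq, hp,
    hp', mul_assoc, ← lintegral_const_mul' (ENNReal.ofReal (1 - γ)⁻¹) _ ENNReal.ofReal_ne_top]
  refine mul_le_mul_right (lintegral_mono fun l => ?_) _
  have hlevel : MeasurableSet {s | ENNReal.ofReal l < g s} := measurableSet_lt measurable_const hg
  simp only [Measure.restrict_restrict hlevel, Measure.restrict_apply hlevel, ← mul_assoc]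
  gcongr
  exact setLIntegral_ofReal_rpow_neg_le (hlevel.inter hI) (inter_subset_right.trans hI0) hγ0 hγ1

end Lorentz

section Minkowski

variable {α β : Type*} [MeasurableSpace α] [MeasurableSpace β] {μ : Measure α} {ν : Measure β}

theorem lintegral_rpow_le_lintegral_weighted {f w : α → ℝ≥0∞} (hf : AEMeasurable f μ)
    (hw : AEMeasurable w μ) (hw_top : ∀ᵐ s ∂μ, w s ≠ ∞) (hfw : ∀ᵐ s ∂μ, w s = 0 → f s = 0)
    {p : ℝ} (hp : 1 ≤ p) :
    (∫⁻ s, f s ∂μ) ^ p ≤ (∫⁻ s, f s ^ p * w s ^ (1 - p) ∂μ) * (∫⁻ s, w s ∂μ) ^ (p - 1) := by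
  have hp0 : 0 < p := by linarith
  have hp1 : 0 ≤ 1 - p⁻¹ := sub_nonneg.2 (inv_le_one_of_one_le₀ hp)
  have hmul : (1 - p⁻¹) * p = p - 1 := by field_simp
  have hholder : ∫⁻ s, f s ∂μ ≤
      (∫⁻ s, f s ^ p * w s ^ (1 - p) ∂μ) ^ p⁻¹ * (∫⁻ s, w s ∂μ) ^ (1 - p⁻¹) :=
    calc ∫⁻ s, f s ∂μ = ∫⁻ s, (f s ^ p * w s ^ (1 - p)) ^ p⁻¹ * w s ^ (1 - p⁻¹) ∂μ := by
          refine lintegral_congr_ae ?_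
          filter_upwards [hw_top, hfw] with s hs hs0
          rcases eq_or_ne (w s) 0 with h | h
          · simp [hs0 h, hp0]
          · rw [ENNReal.mul_rpow_of_nonneg _ _ (by positivity), ENNReal.rpow_rpow_inv hp0.ne',
              ← ENNReal.rpow_mul, mul_assoc, ← ENNReal.rpow_add _ _ h hs,
              show (1 - p) * p⁻¹ + (1 - p⁻¹) = 0 by field_simp; ring, ENNReal.rpow_zero, mul_one]
      _ ≤ _ := ENNReal.lintegral_mul_norm_pow_le ((hf.pow_const _).mul (hw.pow_const _)) hw
          (by positivity) hp1 (by ring)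
  refine (ENNReal.rpow_le_rpow hholder hp0.le).trans_eq ?_
  rw [ENNReal.mul_rpow_of_nonneg _ _ hp0.le, ENNReal.rpow_inv_rpow hp0.ne', ← ENNReal.rpow_mul,
    hmul]

theorem mul_rpow_one_sub_le {a w : ℝ≥0∞} {p : ℝ} (hp : 0 < p) (hw : w ≠ ∞) (h : a ≤ w ^ p) :
    a * w ^ (1 - p) ≤ w := by
  rcases eq_or_ne w 0 with rfl | hw0
  · rw [ENNReal.zero_rpow_of_pos hp, nonpos_iff_eq_zero] at h
    rw [h, zero_mul]
  · refine (mul_le_mul_left h _).trans_eq ?_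
    rw [← ENNReal.rpow_add _ _ hw0 hw, add_sub_cancel, ENNReal.rpow_one]

variable [SFinite μ] [SFinite ν] {F : α → β → ℝ≥0∞} {w : α → ℝ≥0∞}

theorem eLpNorm_top_lintegral_le (hF : Measurable F.uncurry) (hw : Measurable w)
    (h : ∀ᵐ s ∂μ, eLpNorm (F s) ∞ ν ≤ w s) :
    eLpNorm (fun x => ∫⁻ s, F s x ∂μ) ∞ ν ≤ ∫⁻ s, w s ∂μ := by
  have hae : ∀ᵐ s ∂μ, ∀ᵐ x ∂ν, F s x ≤ w s := by
    filter_upwards [h] with s hs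
    filter_upwards [ae_le_eLpNormEssSup (f := F s) (μ := ν)] with x hx
    exact hx.trans (eLpNorm_exponent_top.symm.trans_le hs)
  have hset : MeasurableSet {z : α × β | F z.1 z.2 ≤ w z.1} :=
    measurableSet_le hF (hw.comp measurable_fst)
  rw [eLpNorm_exponent_top]
  refine essSup_le_of_ae_le _ ?_
  filter_upwards [(Measure.ae_ae_comm hset).1 hae] with x hx
  exact lintegral_mono_ae hx

theorem lintegral_lintegral_rpow_le (hF : Measurable F.uncurry) (hw : Measurable w) {p : ℝ}
    (hp : 1 ≤ p) (h : ∀ᵐ s ∂μ, ∫⁻ x, F s x ^ p ∂ν ≤ w s ^ p) :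
    ∫⁻ x, (∫⁻ s, F s x ∂μ) ^ p ∂ν ≤ (∫⁻ s, w s ∂μ) ^ p := by
  have hp0 : 0 < p := by linarith
  rcases eq_or_ne (∫⁻ s, w s ∂μ) ∞ with hW | hW
  · rw [hW, ENNReal.top_rpow_of_pos hp0]
    exact le_top
  have hw_top : ∀ᵐ s ∂μ, w s ≠ ∞ := (ae_lt_top hw hW).mono fun _ => ne_of_lt
  have hzero : ∀ᵐ s ∂μ, ∀ᵐ x ∂ν, w s = 0 → F s x = 0 := by
    filter_upwards [h] with s hs
    by_cases hws : w s = 0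
    · rw [hws, ENNReal.zero_rpow_of_pos hp0, nonpos_iff_eq_zero,
        lintegral_eq_zero_iff (by fun_prop)] at hs
      filter_upwards [hs] with x hx _
      exact (ENNReal.rpow_eq_zero_iff_of_pos hp0).1 hx
    · exact Filter.Eventually.of_forall fun _ h0 => absurd h0 hws
  have hset : MeasurableSet {z : α × β | w z.1 = 0 → F z.1 z.2 = 0} :=
    .imp (hw.comp measurable_fst (measurableSet_singleton 0)) (hF (measurableSet_singleton 0))
  calc ∫⁻ x, (∫⁻ s, F s x ∂μ) ^ p ∂ν
      ≤ ∫⁻ x, (∫⁻ s, F s x ^ p * w s ^ (1 - p) ∂μ) * (∫⁻ s, w s ∂μ) ^ (p - 1) ∂ν := by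
        refine lintegral_mono_ae ?_
        filter_upwards [(Measure.ae_ae_comm hset).1 hzero] with x hx
        exact lintegral_rpow_le_lintegral_weighted (by fun_prop) hw.aemeasurable hw_top hx hp
    _ = (∫⁻ s, (∫⁻ x, F s x ^ p ∂ν) * w s ^ (1 - p) ∂μ) * (∫⁻ s, w s ∂μ) ^ (p - 1) := by
        rw [lintegral_mul_const _ (by fun_prop), lintegral_lintegral_swap (by fun_prop)]
        congr 2 with s
        exact lintegral_mul_const _ (by fun_prop)
    _ ≤ (∫⁻ s, w s ∂μ) * (∫⁻ s, w s ∂μ) ^ (p - 1) := by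
        gcongr ?_ * _
        refine lintegral_mono_ae ?_
        filter_upwards [h, hw_top] with s hs hs_top
        exact mul_rpow_one_sub_le hp0 hs_top hs
    _ = (∫⁻ s, w s ∂μ) ^ p := by
        nth_rw 1 [← ENNReal.rpow_one (∫⁻ s, w s ∂μ)]
        rw [← ENNReal.rpow_add_of_nonneg _ _ zero_le_one (by linarith), add_sub_cancel]

theorem eLpNorm_lintegral_le (hF : Measurable F.uncurry) (hw : Measurable w) {p : ℝ≥0∞}
    (hp : 1 ≤ p) (h : ∀ᵐ s ∂μ, eLpNorm (F s) p ν ≤ w s) :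
    eLpNorm (fun x => ∫⁻ s, F s x ∂μ) p ν ≤ ∫⁻ s, w s ∂μ := by
  rcases eq_or_ne p ∞ with rfl | hp_top
  · exact eLpNorm_top_lintegral_le hF hw h
  have hp0 : p ≠ 0 := (zero_lt_one.trans_le hp).ne'
  have hpos : 0 < p.toReal := ENNReal.toReal_pos hp0 hp_top
  have hpow (f : β → ℝ≥0∞) (c : ℝ≥0∞) :
      eLpNorm f p ν ≤ c ↔ ∫⁻ x, f x ^ p.toReal ∂ν ≤ c ^ p.toReal := by
    rw [eLpNorm_eq_lintegral_rpow_enorm_toReal hp0 hp_top, one_div, ENNReal.rpow_inv_le_iff hpos]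
    simp only [enorm_eq_self]
  simp only [hpow] at h ⊢
  exact lintegral_lintegral_rpow_le hF hw (ENNReal.toReal_mono hp_top hp) h

theorem eLpNorm_integral_le {G : Type*} [NormedAddCommGroup G] [NormedSpace ℝ G]
    [MeasurableSpace G] [OpensMeasurableSpace G] {f : α → β → G} (hf : Measurable f.uncurry)
    (hw : Measurable w) {p : ℝ≥0∞} (hp : 1 ≤ p) (h : ∀ᵐ s ∂μ, eLpNorm (f s) p ν ≤ w s) :
    eLpNorm (fun x => ∫ s, f s x ∂μ) p ν ≤ ∫⁻ s, w s ∂μ :=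
  calc eLpNorm (fun x => ∫ s, f s x ∂μ) p ν ≤ eLpNorm (fun x => ∫⁻ s, ‖f s x‖ₑ ∂μ) p ν :=
        eLpNorm_mono_enorm fun x => enorm_integral_le_lintegral_enorm fun s => f s x
    _ ≤ ∫⁻ s, w s ∂μ :=
        eLpNorm_lintegral_le (F := fun s x => ‖f s x‖ₑ) hf.enorm hw hp <|
          h.mono fun s hs => (eLpNorm_enorm (f s)).trans_le hs

end Minkowski

section Interpolation

variable {α β : Type*} [MeasurableSpace α] [MeasurableSpace β] {μ : Measure α} {ν : Measure β}

theorem rpow_mul_setLIntegral_le_lintegral_rpow {f : α → ℝ≥0∞} (hf : Measurable f) {q : ℝ}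
    (hq : 1 ≤ q) (h : ℝ≥0∞) :
    h ^ (q - 1) * ∫⁻ x in {x | h ≤ f x}, f x ∂μ ≤ ∫⁻ x, f x ^ q ∂μ := by
  have hq1 : 0 ≤ q - 1 := by linarith
  rw [← lintegral_const_mul _ hf]
  refine (setLIntegral_mono' (measurableSet_le measurable_const hf) fun x hx => ?_).trans
    (setLIntegral_le_lintegral _ _)
  calc h ^ (q - 1) * f x ≤ f x ^ (q - 1) * f x ^ (1 : ℝ) := by
        rw [ENNReal.rpow_one]
        gcongr
        exact hx
    _ = f x ^ q := by rw [← ENNReal.rpow_add_of_nonneg _ _ hq1 zero_le_one, sub_add_cancel]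

theorem setLIntegral_superlevel_le {f : α → ℝ≥0∞} (hf : Measurable f) {ρ : ℝ} (hρ : 1 < ρ)
    (hA : ∫⁻ x, f x ^ (ρ / (ρ - 1)) ∂μ ≠ ∞) {l : ℝ≥0∞} (hl0 : l ≠ 0) (hl : l ≠ ∞) :
    ∫⁻ x in {x | (2 * (∫⁻ x, f x ^ (ρ / (ρ - 1)) ∂μ) / l) ^ (ρ - 1) ≤ f x}, f x ∂μ ≤ l / 2 := by
  have hρ1 : 0 < ρ - 1 := by linarith
  have hq : 1 ≤ ρ / (ρ - 1) := (one_le_div hρ1).2 (by linarith)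
  have hexp : (ρ - 1) * (ρ / (ρ - 1) - 1) = 1 := by field_simp; ring
  have hcheb := rpow_mul_setLIntegral_le_lintegral_rpow (μ := μ) hf hq
    ((2 * (∫⁻ x, f x ^ (ρ / (ρ - 1)) ∂μ) / l) ^ (ρ - 1))
  rw [← ENNReal.rpow_mul, hexp, ENNReal.rpow_one] at hcheb
  generalize hA' : ∫⁻ x, f x ^ (ρ / (ρ - 1)) ∂μ = A at hA hcheb ⊢
  rcases eq_or_ne A 0 with rfl | hA0
  · have hf0 : f =ᵐ[μ] 0 := by
      have := (lintegral_eq_zero_iff (by fun_prop)).1 hA'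
      filter_upwards [this] with x hx
      exact (ENNReal.rpow_eq_zero_iff_of_pos (by linarith)).1 hx
    rw [lintegral_congr_ae (ae_restrict_of_ae hf0)]
    simp
  · have hcoeff : 2 * A / l ≠ 0 := ENNReal.div_ne_zero.2 ⟨mul_ne_zero two_ne_zero hA0, hl⟩
    have hcoeff' : 2 * A / l ≠ ∞ := ENNReal.div_ne_top (by finiteness) hl0
    refine (ENNReal.mul_le_mul_iff_right hcoeff hcoeff').1 (hcheb.trans_eq ?_)
    calc A = A * (2 * 2⁻¹) * (l * l⁻¹) := by
          rw [ENNReal.mul_inv_cancel two_ne_zero ENNReal.ofNat_ne_top,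
            ENNReal.mul_inv_cancel hl0 hl, mul_one, mul_one]
      _ = 2 * A / l * (l / 2) := by
          simp only [div_eq_mul_inv]
          ring

theorem lt_div_rpow_iff {x a l : ℝ≥0∞} (hl0 : l ≠ 0) (hl : l ≠ ∞) {k : ℝ} (hk : 0 < k) :
    x < (a / l) ^ k ↔ l < a / x ^ k⁻¹ := by
  rw [← ENNReal.rpow_inv_lt_iff hk, ENNReal.lt_div_iff_mul_lt (.inl hl0) (.inl hl), mul_comm,
    ENNReal.lt_div_iff_mul_lt (.inr hl) (.inr hl0)]

theorem ofReal_rpow_eq_four_mul {l : ℝ} (hl : 0 < l) (k : ℝ) :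
    ENNReal.ofReal (l ^ (k + 2)) =
      4 * ((ENNReal.ofReal l / 2) ^ 2 * ENNReal.ofReal (l ^ k)) := by
  rw [show (2 : ℝ≥0∞) = ENNReal.ofReal 2 by simp, show (4 : ℝ≥0∞) = ENNReal.ofReal 4 by simp,
    ← ENNReal.ofReal_div_of_pos two_pos, ← ENNReal.ofReal_pow (by positivity),
    ← ENNReal.ofReal_mul (by positivity), ← ENNReal.ofReal_mul (by positivity), Real.rpow_add hl,
    Real.rpow_two]
  congr 1
  ring

theorem sq_mul_rpow_le {x a : ℝ≥0∞} (hx : x ≠ ∞) {ρ : ℝ} (hρ : 2 < ρ) :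
    x ^ 2 * (a / x ^ (ρ - 1)⁻¹) ^ (ρ - 2) ≤ a ^ (ρ - 2) * x ^ (ρ / (ρ - 1)) := by
  have hρ1 : 0 < ρ - 1 := by linarith
  rcases eq_or_ne x 0 with rfl | hx0
  · simp
  refine le_of_eq ?_
  rw [div_eq_mul_inv, ENNReal.mul_rpow_of_nonneg _ _ (by linarith), ← ENNReal.rpow_neg,
    ← ENNReal.rpow_mul, ← ENNReal.rpow_natCast, mul_left_comm, ← ENNReal.rpow_add _ _ hx0 hx]
  congr 2
  push_cast
  field_simp
  ring

theorem lintegral_rpow_le_of_sq_mul_meas_le {w M : α → ℝ≥0∞} {G : β → ℝ≥0∞} (hw : Measurable w)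
    (hM : Measurable M) (hG : Measurable G) {ρ : ℝ} (hρ : 2 < ρ)
    (h : ∀ l : ℝ, 0 < l → (ENNReal.ofReal l / 2) ^ 2 * ν {y | ENNReal.ofReal l < G y} ≤
      ∫⁻ x in {x | ENNReal.ofReal l < M x}, w x ∂μ) :
    ∫⁻ y, G y ^ ρ ∂ν ≤ 4 * ENNReal.ofReal (ρ / (ρ - 2)) * ∫⁻ x, w x * M x ^ (ρ - 2) ∂μ := by
  have hρ2 : 0 < ρ - 2 := by linarith
  calc ∫⁻ y, G y ^ ρ ∂ν
      = ENNReal.ofReal ρ * ∫⁻ l in Ioi (0 : ℝ),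
          ν {y | ENNReal.ofReal l < G y} * ENNReal.ofReal (l ^ (ρ - 1)) :=
        lintegral_rpow_eq_lintegral_meas_ofReal_lt_mul hG.aemeasurable (by linarith)
    _ ≤ ENNReal.ofReal ρ * ∫⁻ l in Ioi (0 : ℝ),
          4 * ((∫⁻ x in {x | ENNReal.ofReal l < M x}, w x ∂μ) *
            ENNReal.ofReal (l ^ (ρ - 2 - 1))) := by
        refine mul_le_mul_right (setLIntegral_mono' measurableSet_Ioi fun l hl => ?_) _
        rw [show ρ - 1 = ρ - 2 - 1 + 2 by ring, ofReal_rpow_eq_four_mul hl, mul_left_comm,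
          ← mul_assoc (ν _), mul_comm (ν _)]
        gcongr
        exact h l hl
    _ = 4 * ENNReal.ofReal (ρ / (ρ - 2)) * ∫⁻ x, w x * M x ^ (ρ - 2) ∂μ := by
        rw [lintegral_const_mul' _ _ (by simp),
          lintegral_mul_rpow_eq_lintegral_setLIntegral hw.aemeasurable hM hρ2,
          ← div_mul_cancel₀ ρ hρ2.ne', ENNReal.ofReal_mul (by positivity),
          div_mul_cancel₀ ρ hρ2.ne']
        ring

/- Real interpolation between `L¹ → L^∞` and `L² → L²`: the hypothesis is what the two endpoint
bounds give for the splitting of `f` at height `h`, and the conclusion follows from the choice of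
the height `h = (2A / l) ^ (ρ - 1)`, where `A = ∫ f ^ (ρ / (ρ - 1))`. -/
theorem lintegral_rpow_le_of_truncation {f : α → ℝ≥0∞} {G : β → ℝ≥0∞} (hf : Measurable f)
    (hG : Measurable G) {ρ : ℝ} (hρ : 2 < ρ)
    (hfG : ∀ l h : ℝ≥0∞, h ≠ ∞ → ∫⁻ x in {x | h ≤ f x}, f x ∂μ ≤ l / 2 →
      (l / 2) ^ 2 * ν {y | l < G y} ≤ ∫⁻ x in {x | f x < h}, f x ^ 2 ∂μ) :
    ∫⁻ y, G y ^ ρ ∂ν ≤ ENNReal.ofReal (4 * ρ / (ρ - 2) * 2 ^ (ρ - 2)) *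
      (∫⁻ x, f x ^ (ρ / (ρ - 1)) ∂μ) ^ (ρ - 1) := by
  have hρ1 : 0 < ρ - 1 := by linarith
  have hρ2 : 0 < ρ - 2 := by linarith
  set A := ∫⁻ x, f x ^ (ρ / (ρ - 1)) ∂μ with hA_def
  rcases eq_or_ne A ∞ with hA | hA
  · rw [hA, ENNReal.top_rpow_of_pos hρ1, ENNReal.mul_top (ENNReal.ofReal_pos.2 (by positivity)).ne']
    exact le_top
  have hf_top : ∀ᵐ x ∂μ, f x ≠ ∞ := by
    filter_upwards [ae_lt_top (by fun_prop) hA] with x hx hx'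
    rw [hx', ENNReal.top_rpow_of_pos (by positivity)] at hx
    exact hx.ne rfl
  set M : α → ℝ≥0∞ := fun x => 2 * A / f x ^ (ρ - 1)⁻¹
  have hweak (l : ℝ) (hl : 0 < l) :
      (ENNReal.ofReal l / 2) ^ 2 * ν {y | ENNReal.ofReal l < G y} ≤
        ∫⁻ x in {x | ENNReal.ofReal l < M x}, f x ^ 2 ∂μ := by
    have hl0 : ENNReal.ofReal l ≠ 0 := by simpa using hl
    have hM : {x | ENNReal.ofReal l < M x} = {x | f x < (2 * A / ENNReal.ofReal l) ^ (ρ - 1)} :=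
      Set.ext fun x => (lt_div_rpow_iff hl0 ENNReal.ofReal_ne_top hρ1).symm
    rw [hM]
    exact hfG _ _ (by finiteness)
      (setLIntegral_superlevel_le hf (by linarith) hA hl0 ENNReal.ofReal_ne_top)
  calc ∫⁻ y, G y ^ ρ ∂ν
      ≤ 4 * ENNReal.ofReal (ρ / (ρ - 2)) * ∫⁻ x, f x ^ 2 * M x ^ (ρ - 2) ∂μ :=
        lintegral_rpow_le_of_sq_mul_meas_le (by fun_prop) (by fun_prop) hG hρ hweak
    _ ≤ 4 * ENNReal.ofReal (ρ / (ρ - 2)) * ∫⁻ x, (2 * A) ^ (ρ - 2) * f x ^ (ρ / (ρ - 1)) ∂μ := by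
        gcongr 4 * _ * ?_
        exact lintegral_mono_ae (hf_top.mono fun x hx => sq_mul_rpow_le hx hρ)
    _ = ENNReal.ofReal (4 * ρ / (ρ - 2) * 2 ^ (ρ - 2)) * A ^ (ρ - 1) := by
        rw [lintegral_const_mul _ (by fun_prop), ← hA_def, ENNReal.mul_rpow_of_nonneg _ _ hρ2.le,
          show ρ - 1 = ρ - 2 + 1 by ring, ENNReal.rpow_add_of_nonneg _ _ hρ2.le zero_le_one,
          ENNReal.rpow_one, ENNReal.ofReal_mul (by positivity), mul_div_assoc,
          ENNReal.ofReal_mul (by positivity), ← ENNReal.ofReal_rpow_of_pos two_pos,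
          ENNReal.ofReal_ofNat, ENNReal.ofReal_ofNat]
        ring

end Interpolation

theorem eLpNorm_two_sq {α ε : Type*} [MeasurableSpace α] [TopologicalSpace ε]
    [ContinuousENorm ε] (μ : Measure α) (f : α → ε) :
    eLpNorm f 2 μ ^ 2 = ∫⁻ x, ‖f x‖ₑ ^ 2 ∂μ := by
  simpa using eLpNorm_nnreal_pow_eq_lintegral (f := f) (μ := μ) two_ne_zero

theorem memLp_two_indicator_enorm_lt {α E : Type*} [MeasurableSpace α] {μ : Measure α}
    [NormedAddCommGroup E] {f : α → E} (hf : Integrable f μ) (hfm : StronglyMeasurable f)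
    {h : ℝ≥0∞} (hh : h ≠ ∞) : MemLp ({x | ‖f x‖ₑ < h}.indicator f) 2 μ := by
  have hS : MeasurableSet {x | ‖f x‖ₑ < h} := measurableSet_lt hfm.enorm measurable_const
  refine ⟨(hf.indicator hS).aestronglyMeasurable, ?_⟩
  refine (ENNReal.pow_lt_top_iff.1 ?_).resolve_right two_ne_zero
  rw [eLpNorm_two_sq]
  calc ∫⁻ x, ‖{x | ‖f x‖ₑ < h}.indicator f x‖ₑ ^ 2 ∂μ ≤ ∫⁻ x, h * ‖f x‖ₑ ∂μ := by
        refine lintegral_mono fun x => ?_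
        by_cases hx : ‖f x‖ₑ < h
        · simpa [hx, sq] using mul_le_mul_left hx.le _
        · simp [hx]
    _ = h * ∫⁻ x, ‖f x‖ₑ ∂μ := lintegral_const_mul' _ _ hh
    _ < ∞ := ENNReal.mul_lt_top hh.lt_top hf.hasFiniteIntegral

section Fourier

open scoped FourierTransform SchwartzMap

variable {V F : Type*} [NormedAddCommGroup V] [InnerProductSpace ℝ V] [FiniteDimensional ℝ V]
  [MeasurableSpace V] [BorelSpace V] [NormedAddCommGroup F] [InnerProductSpace ℂ F]

theorem continuous_fourier_of_integrable {f : V → F} (hf : Integrable f) : Continuous (𝓕 f) :=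
  VectorFourier.fourierIntegral_continuous Real.continuous_fourierChar
    (by exact continuous_inner) hf

theorem enorm_fourier_le_lintegral_enorm (f : V → F) (ξ : V) : ‖𝓕 f ξ‖ₑ ≤ ∫⁻ x, ‖f x‖ₑ := by
  refine (enorm_integral_le_lintegral_enorm _).trans_eq (lintegral_congr fun x => ?_)
  rw [Circle.smul_def, enorm_smul, ← ofReal_norm, Circle.norm_coe, ENNReal.ofReal_one, one_mul]

variable [CompleteSpace F]

theorem Lp_fourier_ae_eq_fourier {f : V → F} (hf : Integrable f) (hf2 : MemLp f 2) :
    (𝓕 (hf2.toLp f) : Lp (α := V) F 2 volume) =ᵐ[volume] 𝓕 f := by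
  set fL : Lp (α := V) F 2 volume := hf2.toLp f
  have hloc : LocallyIntegrable (𝓕 fL : Lp (α := V) F 2 volume) volume :=
    (Lp.memLp (𝓕 fL)).locallyIntegrable one_le_two
  refine ae_eq_of_integral_contDiff_smul_eq hloc
    (continuous_fourier_of_integrable hf).locallyIntegrable fun g hg hg_supp => ?_
  have hg_supp' : HasCompactSupport (Complex.ofRealCLM ∘ g) := hg_supp.comp_left rfl
  let φ : 𝓢(V, ℂ) := hg_supp'.toSchwartzMap (by fun_prop)
  have hφ (x : V) : φ x = (g x : ℂ) := rfl
  have hdistr : ∫ x, 𝓕 (φ : V → ℂ) x • fL x = ∫ x, φ x • (𝓕 fL : Lp (α := V) F 2 volume) x := by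
    have := congrArg (fun T => T φ) (Lp.fourier_toTemperedDistribution_eq fL)
    simpa only [TemperedDistribution.fourier_apply, Lp.toTemperedDistribution_apply,
      SchwartzMap.fourier_coe] using this
  have hflip : ∫ x, 𝓕 (φ : V → ℂ) x • f x = ∫ x, φ x • 𝓕 f x := by
    have := VectorFourier.integral_fourierIntegral_smul_eq_flip (μ := (volume : Measure V))
      (ν := (volume : Measure V)) (L := innerₗ V) (f := (φ : V → ℂ)) (g := f)
      Real.continuous_fourierChar (by exact continuous_inner) φ.integrable hf
    rwa [flip_innerₗ] at this
  have hrep : ∫ x, 𝓕 (φ : V → ℂ) x • fL x = ∫ x, 𝓕 (φ : V → ℂ) x • f x := by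
    refine integral_congr_ae ?_
    filter_upwards [hf2.coeFn_toLp] with x hx
    rw [hx]
  simpa only [hφ, Complex.coe_smul] using (hdistr.symm.trans hrep).trans hflip

theorem eLpNorm_two_fourier {f : V → F} (hf : Integrable f) (hf2 : MemLp f 2) :
    eLpNorm (𝓕 f) 2 volume = eLpNorm f 2 volume := by
  rw [← eLpNorm_congr_ae (Lp_fourier_ae_eq_fourier hf hf2), ← eLpNorm_congr_ae hf2.coeFn_toLp,
    ← Lp.enorm_def, ← Lp.enorm_def, ← ofReal_norm, ← ofReal_norm, Lp.norm_fourier_eq]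

theorem lintegral_enorm_fourier_sq {f : V → F} (hf : Integrable f) (hf2 : MemLp f 2) :
    ∫⁻ ξ, ‖𝓕 f ξ‖ₑ ^ 2 = ∫⁻ x, ‖f x‖ₑ ^ 2 := by
  rw [← eLpNorm_two_sq, ← eLpNorm_two_sq, eLpNorm_two_fourier hf hf2]

theorem sq_mul_meas_lt_enorm_fourier_le {f : V → F} (hf : Integrable f)
    (hfm : StronglyMeasurable f) {l h : ℝ≥0∞} (hh : h ≠ ∞)
    (hl : ∫⁻ x in {x | h ≤ ‖f x‖ₑ}, ‖f x‖ₑ ≤ l / 2) :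
    (l / 2) ^ 2 * volume {ξ | l < ‖𝓕 f ξ‖ₑ} ≤ ∫⁻ x in {x | ‖f x‖ₑ < h}, ‖f x‖ₑ ^ 2 := by
  set S : Set V := {x | ‖f x‖ₑ < h} with hS_def
  have hS : MeasurableSet S := measurableSet_lt hfm.enorm measurable_const
  have hS_compl : {x | h ≤ ‖f x‖ₑ} = Sᶜ := by ext; simp [hS_def]
  have hlow := hf.indicator hS
  have hlow2 := memLp_two_indicator_enorm_lt hf hfm hh
  have hadd (ξ : V) : 𝓕 f ξ = 𝓕 (S.indicator f) ξ + 𝓕 (Sᶜ.indicator f) ξ := by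
    conv_lhs => rw [← indicator_self_add_compl S f]
    exact congrFun (VectorFourier.fourierIntegral_add Real.continuous_fourierChar
      (by exact continuous_inner) hlow (hf.indicator hS.compl)) ξ
  have hhigh (ξ : V) : ‖𝓕 (Sᶜ.indicator f) ξ‖ₑ ≤ l / 2 := by
    refine (enorm_fourier_le_lintegral_enorm _ ξ).trans ?_
    simpa only [enorm_indicator_eq_indicator_enorm, lintegral_indicator hS.compl, hS_compl]
      using hl
  have hsub : {ξ | l < ‖𝓕 f ξ‖ₑ} ⊆ {ξ | (l / 2) ^ 2 ≤ ‖𝓕 (S.indicator f) ξ‖ₑ ^ 2} := by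
    intro ξ (hξ : l < ‖𝓕 f ξ‖ₑ)
    refine mem_ofPred.2 <| pow_le_pow_left' (le_of_not_gt fun hlt => hξ.not_ge ?_) 2
    calc ‖𝓕 f ξ‖ₑ ≤ ‖𝓕 (S.indicator f) ξ‖ₑ + ‖𝓕 (Sᶜ.indicator f) ξ‖ₑ :=
          hadd ξ ▸ enorm_add_le _ _
      _ ≤ l / 2 + l / 2 := add_le_add hlt.le (hhigh ξ)
      _ = l := ENNReal.add_halves l
  calc (l / 2) ^ 2 * volume {ξ | l < ‖𝓕 f ξ‖ₑ}
      ≤ (l / 2) ^ 2 * volume {ξ | (l / 2) ^ 2 ≤ ‖𝓕 (S.indicator f) ξ‖ₑ ^ 2} := by gcongr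
    _ ≤ ∫⁻ ξ, ‖𝓕 (S.indicator f) ξ‖ₑ ^ 2 := mul_meas_ge_le_lintegral
        ((continuous_fourier_of_integrable hlow).enorm.measurable.pow_const 2) _
    _ = ∫⁻ x in S, ‖f x‖ₑ ^ 2 := by
        rw [lintegral_enorm_fourier_sq hlow hlow2, ← lintegral_indicator hS]
        refine lintegral_congr fun x => ?_
        by_cases hx : x ∈ S <;> simp [hx]

theorem lintegral_enorm_fourier_rpow_le {f : V → F} (hf : Integrable f) {ρ : ℝ} (hρ : 2 < ρ) :
    ∫⁻ ξ, ‖𝓕 f ξ‖ₑ ^ ρ ≤ ENNReal.ofReal (4 * ρ / (ρ - 2) * 2 ^ (ρ - 2)) *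
      (∫⁻ x, ‖f x‖ₑ ^ (ρ / (ρ - 1))) ^ (ρ - 1) := by
  obtain ⟨g, hg, hfg⟩ := hf.aestronglyMeasurable
  have hg_int : Integrable g := hf.congr hfg
  have hnorm : ∫⁻ x, ‖f x‖ₑ ^ (ρ / (ρ - 1)) = ∫⁻ x, ‖g x‖ₑ ^ (ρ / (ρ - 1)) :=
    lintegral_congr_ae (hfg.mono fun x hx => by simp only [hx])
  simp_rw [Real.fourier_congr_ae hfg, hnorm]
  exact lintegral_rpow_le_of_truncation hg.enorm
    (continuous_fourier_of_integrable hg_int).enorm.measurable hρ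
    fun _ _ => sq_mul_meas_lt_enorm_fourier_le hg_int hg

theorem eLpNorm_fourier_le_of_two_lt {f : V → F} (hf : Integrable f) {p q : ℝ≥0∞}
    [p.HolderConjugate q] (hp : 2 < p) (hp_top : p ≠ ∞) :
    eLpNorm (𝓕 f) p volume ≤
      ENNReal.ofReal (4 * p.toReal / (p.toReal - 2) * 2 ^ (p.toReal - 2)) ^ p.toReal⁻¹ *
        eLpNorm f q volume := by
  set ρ := p.toReal
  have hρ : 2 < ρ := by simpa using ENNReal.toReal_strict_mono hp_top hp
  have hρ1 : 0 < ρ - 1 := by linarith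
  have hq_top : q ≠ ∞ :=
    (ENNReal.HolderConjugate.ne_top_iff_ne_one q p).2 (ENNReal.one_lt_two.trans hp).ne'
  have hq : q.toReal = ρ / (ρ - 1) :=
    (ENNReal.HolderConjugate.toReal_of_ne_top hp_top hq_top).conjugate_eq
  rw [eLpNorm_eq_lintegral_rpow_enorm_toReal (ENNReal.HolderConjugate.ne_zero p q) hp_top,
    eLpNorm_eq_lintegral_rpow_enorm_toReal (ENNReal.HolderConjugate.ne_zero q p) hq_top, hq]
  calc (∫⁻ ξ, ‖𝓕 f ξ‖ₑ ^ ρ) ^ (1 / ρ)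
      ≤ (ENNReal.ofReal (4 * ρ / (ρ - 2) * 2 ^ (ρ - 2)) *
          (∫⁻ x, ‖f x‖ₑ ^ (ρ / (ρ - 1))) ^ (ρ - 1)) ^ (1 / ρ) := by
        gcongr
        exact lintegral_enorm_fourier_rpow_le hf hρ
    _ = ENNReal.ofReal (4 * ρ / (ρ - 2) * 2 ^ (ρ - 2)) ^ ρ⁻¹ *
          (∫⁻ x, ‖f x‖ₑ ^ (ρ / (ρ - 1))) ^ (1 / (ρ / (ρ - 1))) := by
        rw [ENNReal.mul_rpow_of_nonneg _ _ (by positivity), ← ENNReal.rpow_mul, one_div]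
        congr 2
        field_simp

variable (V F)

theorem exists_eLpNorm_fourier_le {p q : ℝ≥0∞} [hpq : p.HolderConjugate q] (hp : 2 ≤ p) :
    ∃ C : ℝ≥0∞, C ≠ ∞ ∧ ∀ f : V → F, Integrable f →
      eLpNorm (𝓕 f) p volume ≤ C * eLpNorm f q volume := by
  rcases eq_or_ne p ∞ with rfl | hp_top
  · obtain rfl : q = 1 := ENNReal.HolderConjugate.unique ∞ q 1
    refine ⟨1, ENNReal.one_ne_top, fun f _ => ?_⟩
    rw [one_mul, eLpNorm_one_eq_lintegral_enorm, eLpNorm_exponent_top]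
    exact essSup_le_of_ae_le _ (ae_of_all _ (enorm_fourier_le_lintegral_enorm f))
  rcases hp.eq_or_lt with rfl | hp2
  · obtain rfl : q = 2 := ENNReal.HolderConjugate.unique 2 q 2
    refine ⟨1, ENNReal.one_ne_top, fun f hf => ?_⟩
    rw [one_mul]
    rcases eq_or_ne (eLpNorm f 2 volume) ∞ with hf2 | hf2
    · exact hf2 ▸ le_top
    · exact (eLpNorm_two_fourier hf ⟨hf.aestronglyMeasurable, hf2.lt_top⟩).le
  · exact ⟨_, ENNReal.rpow_ne_top_of_nonneg (by positivity) ENNReal.ofReal_ne_top,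
      fun f hf => eLpNorm_fourier_le_of_two_lt hf hp2 hp_top⟩

end Fourier

section Dispersive

open scoped FourierTransform

variable {E : Type*} [NormedAddCommGroup E]

/-- The unimodular Gaussian `e^{i|y|²/(4T)}`, whose value at `x - y` is the oscillating factor of
the Schrödinger kernel at time `T`. -/
def chirp (T : ℝ) (y : E) : ℂ :=
  Complex.exp (Complex.I * ((‖y‖ ^ 2 : ℝ) : ℂ) / (4 * (T : ℂ)))

theorem chirp_eq_exp_ofReal_mul_I (T : ℝ) (y : E) :
    chirp T y = Complex.exp ((‖y‖ ^ 2 / (4 * T) : ℝ) * Complex.I) := by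
  rw [chirp]
  push_cast
  ring_nf

theorem norm_chirp (T : ℝ) (y : E) : ‖chirp T y‖ = 1 := by
  rw [chirp_eq_exp_ofReal_mul_I, Complex.norm_exp_ofReal_mul_I]

theorem enorm_chirp (T : ℝ) (y : E) : ‖chirp T y‖ₑ = 1 := by
  rw [← ofReal_norm, norm_chirp, ENNReal.ofReal_one]

theorem chirp_neg_mul_chirp (T : ℝ) (y : E) : chirp (-T) y * chirp T y = 1 := by
  rw [chirp_eq_exp_ofReal_mul_I, chirp_eq_exp_ofReal_mul_I, ← Complex.exp_add, ← add_mul,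
    ← Complex.ofReal_add]
  simp [div_neg]

theorem continuous_chirp (T : ℝ) : Continuous (chirp T : E → ℂ) := by
  unfold chirp
  fun_prop

theorem norm_const_schrod (d : ℕ) (T : ℝ) :
    ‖(4 * (π : ℂ) * Complex.I * (T : ℂ)) ^ (-(d : ℂ) / 2)‖ = (4 * π * |T|) ^ (-(d : ℝ) / 2) := by
  have hd : -(d : ℂ) / 2 = ((-(d : ℝ) / 2 : ℝ) : ℂ) := by push_cast; rfl
  rw [hd, Complex.norm_cpow_real]
  simp [abs_of_pos Real.pi_pos]

section

variable [MeasureSpace E]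

theorem schrod_apply_of_ne_zero (d : ℕ) {T : ℝ} (hT : T ≠ 0) (f : E → ℂ) (x : E) :
    schrod d T f x =
      (4 * (π : ℂ) * Complex.I * (T : ℂ)) ^ (-(d : ℂ) / 2) * ∫ y, chirp T (x - y) * f y := by
  rw [schrod, if_neg hT]
  rfl

theorem integrable_chirp_comp_mul_iff [BorelSpace E] {T : ℝ}
    {φ : E → E} (hφ : Continuous φ) {f : E → ℂ} :
    Integrable (fun y => chirp T (φ y) * f y) ↔ Integrable f := by
  have hbdd (S : ℝ) {g : E → ℂ} (hg : Integrable g) : Integrable fun y => chirp S (φ y) * g y :=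
    hg.bdd_mul (f := fun y => chirp S (φ y)) ((continuous_chirp S).comp hφ).aestronglyMeasurable
      (ae_of_all _ fun y => (norm_chirp S (φ y)).le)
  refine ⟨fun h => ?_, hbdd T⟩
  simpa only [← mul_assoc, chirp_neg_mul_chirp, one_mul] using hbdd (-T) h

theorem schrod_eq_zero_of_not_integrable [BorelSpace E] (d : ℕ)
    {T : ℝ} (hT : T ≠ 0) {f : E → ℂ} (hf : ¬Integrable f) : schrod d T f = 0 := by
  funext x
  rw [schrod_apply_of_ne_zero d hT, integral_undef, mul_zero, Pi.zero_apply]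
  rwa [integrable_chirp_comp_mul_iff (continuous_sub_left x)]

end

variable [InnerProductSpace ℝ E]

theorem chirp_sub {T : ℝ} (hT : T ≠ 0) (x y : E) :
    chirp T (x - y) =
      chirp T x * (Real.fourierChar (-inner ℝ y ((4 * π * T)⁻¹ • x)) * chirp T y) := by
  simp only [chirp_eq_exp_ofReal_mul_I, Real.fourierChar_apply, ← Complex.exp_add, ← add_mul,
    ← Complex.ofReal_add]
  congr 3
  rw [norm_sub_sq_real, inner_smul_right, real_inner_comm]
  field_simp [Real.pi_ne_zero]
  ring

variable [FiniteDimensional ℝ E] [MeasurableSpace E] [BorelSpace E]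

theorem enorm_schrod {d : ℕ} {T : ℝ} (hT : T ≠ 0) (f : E → ℂ) (x : E) :
    ‖schrod d T f x‖ₑ = ENNReal.ofReal ((4 * π * |T|) ^ (-(d : ℝ) / 2)) *
      ‖𝓕 (fun y => chirp T y * f y) ((4 * π * T)⁻¹ • x)‖ₑ := by
  have hfourier : ∫ y, chirp T (x - y) * f y =
      chirp T x * 𝓕 (fun y => chirp T y * f y) ((4 * π * T)⁻¹ • x) := by
    rw [Real.fourier_eq, ← integral_const_mul]
    simp only [chirp_sub hT, Circle.smul_def, smul_eq_mul, mul_assoc]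
  rw [schrod_apply_of_ne_zero d hT, hfourier, enorm_mul, enorm_mul, enorm_chirp, one_mul,
    ← ofReal_norm, norm_const_schrod]

theorem eLpNorm_comp_smul {ε : Type*} [TopologicalSpace ε] [ContinuousENorm ε] {c : ℝ}
    (hc : c ≠ 0) (g : E → ε) (p : ℝ≥0∞) :
    eLpNorm (fun x => g (c • x)) p volume =
      ENNReal.ofReal (|c|⁻¹ ^ (Module.finrank ℝ E * p⁻¹.toReal)) * eLpNorm g p volume := by
  have hc' : 0 < |c|⁻¹ := inv_pos.2 (abs_pos.2 hc)
  have hmap : eLpNorm (fun x => g (c • x)) p volume =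
      eLpNorm g p (Measure.map (fun x => c • x) volume) :=
    ((measurableEmbedding_const_smul₀ hc).eLpNorm_map_measure).symm
  rw [hmap, Measure.map_addHaar_smul _ hc, abs_inv, abs_pow, ← inv_pow,
    eLpNorm_smul_measure_of_ne_zero (by positivity), smul_eq_mul,
    ENNReal.ofReal_rpow_of_pos (by positivity), one_div, ← Real.rpow_natCast_mul hc'.le]

theorem toReal_half_sub_one_div {p : ℝ≥0∞} (hp : 2 ≤ p) :
    (1 / 2 - 1 / p).toReal = 1 / 2 - p⁻¹.toReal := by
  rw [one_div, one_div, ENNReal.toReal_sub_of_le (ENNReal.inv_le_inv.2 hp) (by simp)]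
  simp

variable (E)

theorem exists_eLpNorm_schrod_le {p q : ℝ≥0∞} [p.HolderConjugate q] (hp : 2 ≤ p) :
    ∃ C : ℝ≥0∞, C ≠ ∞ ∧ ∀ T : ℝ, T ≠ 0 → ∀ f : E → ℂ,
      eLpNorm (schrod (Module.finrank ℝ E) T f) p volume ≤
        C * ENNReal.ofReal ((4 * π * |T|) ^ (-(Module.finrank ℝ E * (1 / 2 - 1 / p).toReal))) *
          eLpNorm f q volume := by
  obtain ⟨C, hC, hfourier⟩ := exists_eLpNorm_fourier_le E ℂ (q := q) hp
  refine ⟨C, hC, fun T hT f => ?_⟩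
  by_cases hf : Integrable f
  swap
  · simp [schrod_eq_zero_of_not_integrable _ hT hf]
  set n := Module.finrank ℝ E
  set g : E → ℂ := fun y => chirp T y * f y with hg_def
  have hT' : 0 < 4 * π * |T| := by positivity
  have hc : (4 * π * T)⁻¹ ≠ 0 := by positivity
  have hc_abs : |(4 * π * T)⁻¹|⁻¹ = 4 * π * |T| := by
    rw [abs_inv, inv_inv, abs_mul, abs_of_pos (by positivity : 0 < 4 * π)]
  have hexp : -(n : ℝ) / 2 + n * p⁻¹.toReal = -(n * (1 / 2 - 1 / p).toReal) := by
    rw [toReal_half_sub_one_div hp]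
    ring
  have hg : Integrable g := (integrable_chirp_comp_mul_iff continuous_id).2 hf
  have hgf : eLpNorm g q volume = eLpNorm f q volume :=
    eLpNorm_congr_enorm_ae (ae_of_all _ fun y => by
      simp only [hg_def, enorm_mul, enorm_chirp, one_mul])
  calc eLpNorm (schrod n T f) p volume
      = eLpNorm (((4 * π * |T|) ^ (-(n : ℝ) / 2)) • fun x => 𝓕 g ((4 * π * T)⁻¹ • x)) p volume := by
        refine eLpNorm_congr_enorm_ae (ae_of_all _ fun x => ?_)
        rw [enorm_schrod hT, Pi.smul_apply, enorm_smul, Real.enorm_of_nonneg (by positivity)]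
    _ = ENNReal.ofReal ((4 * π * |T|) ^ (-(n * (1 / 2 - 1 / p).toReal))) *
          eLpNorm (𝓕 g) p volume := by
        rw [eLpNorm_const_smul, eLpNorm_comp_smul hc, hc_abs,
          Real.enorm_of_nonneg (by positivity), ← mul_assoc,
          ← ENNReal.ofReal_mul (by positivity), ← Real.rpow_add hT', hexp]
    _ ≤ ENNReal.ofReal ((4 * π * |T|) ^ (-(n * (1 / 2 - 1 / p).toReal))) *
          (C * eLpNorm f q volume) := by
        gcongr
        exact (hfourier g hg).trans_eq (by rw [hgf])
    _ = _ := by ring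

end Dispersive

section Nonlinearity

theorem eLpNorm_nonlin_le {α : Type*} [MeasurableSpace α] {μ : Measure α} {a : ℝ} (ha : 0 < a)
    {v : α → ℂ} (hv : AEStronglyMeasurable v μ) (m r p : ℝ≥0∞) [ENNReal.HolderTriple m r p] :
    eLpNorm (nonlin a v) p μ ≤ eLpNorm v (m * ENNReal.ofReal a) μ ^ a * eLpNorm v r μ := by
  have hpow : AEStronglyMeasurable (fun x => ‖v x‖ ^ a) μ :=
    (hv.norm.aemeasurable.pow_const a).aestronglyMeasurable
  rw [← eLpNorm_norm_rpow v ha]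
  refine (eLpNorm_congr_enorm_ae (ae_of_all _ fun x => ?_)).trans_le
    (eLpNorm_smul_le_mul_eLpNorm hv hpow)
  rw [nonlin, Pi.smul_apply', Complex.real_smul]

theorem measurable_nonlin {α : Type*} [MeasurableSpace α] {a : ℝ} {v : α → ℂ}
    (hv : Measurable v) : Measurable (nonlin a v) := by
  unfold nonlin
  fun_prop

end Nonlinearity

section Measurability

theorem measurable_eLpNorm_of_uncurry {α β F : Type*} [MeasurableSpace α] [MeasurableSpace β]
    [NormedAddCommGroup F] [MeasurableSpace F] [OpensMeasurableSpace F] {ν : Measure β} [SFinite ν]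
    {u : α → β → F} (hu : Measurable u.uncurry) {p : ℝ≥0∞} (hp : p ≠ ∞) :
    Measurable fun s => eLpNorm (u s) p ν := by
  rcases eq_or_ne p 0 with rfl | hp0
  · simp only [eLpNorm_exponent_zero, measurable_const]
  · simp only [eLpNorm_eq_lintegral_rpow_enorm_toReal hp0 hp]
    exact (hu.enorm.pow_const p.toReal).lintegral_prod_right'.pow_const _

variable {E : Type*} [NormedAddCommGroup E] [MeasureSpace E] [BorelSpace E]
  [SecondCountableTopology E] [SFinite (volume : Measure E)]

theorem measurable_uncurry_schrod {α : Type*} [MeasurableSpace α] (d : ℕ) {τ : α → ℝ}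
    (hτ : Measurable τ) {f : α → E → ℂ} (hf : Measurable f.uncurry) :
    Measurable (fun s => schrod d (τ s) (f s)).uncurry := by
  have hkernel : StronglyMeasurable fun z : (α × E) × E =>
      chirp (τ z.1.1) (z.1.2 - z.2) * f z.1.1 z.2 := by
    unfold chirp
    exact (Measurable.mul (by fun_prop)
      (hf.comp (measurable_fst.fst.prodMk measurable_snd))).stronglyMeasurable
  have hint : Measurable fun z : α × E =>
      (4 * (π : ℂ) * Complex.I * (τ z.1 : ℂ)) ^ (-(d : ℂ) / 2) *
        ∫ y, chirp (τ z.1) (z.2 - y) * f z.1 y :=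
    .mul (by fun_prop) hkernel.integral_prod_right'.measurable
  have heq : (fun s => schrod d (τ s) (f s)).uncurry = fun z => if τ z.1 = 0 then f.uncurry z else
      (4 * (π : ℂ) * Complex.I * (τ z.1 : ℂ)) ^ (-(d : ℂ) / 2) *
        ∫ y, chirp (τ z.1) (z.2 - y) * f z.1 y := by
    funext ⟨s, x⟩
    split_ifs with hs
    · simp only [Function.uncurry, schrod, hs, if_true]
    · exact schrod_apply_of_ne_zero d hs (f s) x
  rw [heq]
  exact hf.ite (hτ.comp measurable_fst (measurableSet_singleton 0)) hint

end Measurability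

section Duhamel

theorem le_ofReal_rpow_neg_mul_iSup (N : ℝ → ℝ≥0∞) (γ : ℝ) {I : Set ℝ} {s : ℝ} (hs : s ∈ I)
    (hs0 : 0 < s) :
    N s ≤ ENNReal.ofReal (s ^ (-γ)) * ⨆ s ∈ I, ENNReal.ofReal (s ^ γ) * N s := by
  calc N s = ENNReal.ofReal (s ^ (-γ)) * (ENNReal.ofReal (s ^ γ) * N s) := by
        rw [← mul_assoc, ← ENNReal.ofReal_mul (by positivity), ← Real.rpow_add hs0,
          neg_add_cancel, Real.rpow_zero, ENNReal.ofReal_one, one_mul]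
    _ ≤ _ := by
        gcongr
        exact le_iSup₂ (f := fun s (_ : s ∈ I) => ENNReal.ofReal (s ^ γ) * N s) s hs

theorem rpow_neg_four_pi_mul_abs_sub_le {t s γ : ℝ} (ht : 0 < t) (hs : s ≤ t / 2) (hγ : 0 ≤ γ) :
    (4 * π * |t - s|) ^ (-γ) ≤ t ^ (-γ) := by
  refine Real.rpow_le_rpow_of_nonpos ht ?_ (neg_nonpos.2 hγ)
  rw [abs_of_pos (by linarith)]
  nlinarith [Real.pi_gt_three]

variable (E : Type*) [NormedAddCommGroup E] [InnerProductSpace ℝ E] [FiniteDimensional ℝ E]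
  [MeasurableSpace E] [BorelSpace E]

theorem exists_eLpNorm_schrod_nonlin_le {a : ℝ} (ha : 0 < a) {r q : ℝ≥0∞} (hr : 2 ≤ r)
    (hq : ENNReal.ofReal a / q + 2 / r = 1) :
    ∃ C : ℝ≥0∞, C ≠ ∞ ∧ ∀ T : ℝ, T ≠ 0 → ∀ v : E → ℂ, AEStronglyMeasurable v →
      eLpNorm (schrod (Module.finrank ℝ E) T (nonlin a v)) r volume ≤
        C * ENNReal.ofReal ((4 * π * |T|) ^ (-(Module.finrank ℝ E * (1 / 2 - 1 / r).toReal))) *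
          (eLpNorm v q volume ^ a * eLpNorm v r volume) := by
  have ha0 : ENNReal.ofReal a ≠ 0 := by simpa using ha
  have hr1 : r⁻¹ ≤ 1 := ENNReal.inv_le_one.2 (ENNReal.one_lt_two.le.trans hr)
  have : r.HolderConjugate (1 - r⁻¹)⁻¹ :=
    ENNReal.HolderConjugate.inv_one_sub_inv' (ENNReal.one_lt_two.le.trans hr)
  have : ENNReal.HolderTriple (q / ENNReal.ofReal a) r (1 - r⁻¹)⁻¹ := by
    constructor
    rw [inv_inv, ENNReal.inv_div (.inl ENNReal.ofReal_ne_top) (.inl ha0)]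
    refine ENNReal.eq_sub_of_add_eq (ne_top_of_le_ne_top ENNReal.one_ne_top hr1) ?_
    rw [add_assoc, ← two_mul, ← div_eq_mul_inv, hq]
  obtain ⟨C, hC, hdisp⟩ := exists_eLpNorm_schrod_le E (q := (1 - r⁻¹)⁻¹) hr
  refine ⟨C, hC, fun T hT v hv => (hdisp T hT _).trans ?_⟩
  gcongr
  simpa only [ENNReal.div_mul_cancel ha0 ENNReal.ofReal_ne_top]
    using eLpNorm_nonlin_le ha hv (q / ENNReal.ofReal a) r (1 - r⁻¹)⁻¹

theorem exists_eLpNorm_schrod_sub_nonlin_le {a : ℝ} (ha : 0 < a) {r q : ℝ≥0∞} (hr : 2 ≤ r)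
    (hq : ENNReal.ofReal a / q + 2 / r = 1) {γ : ℝ}
    (hγ : γ = Module.finrank ℝ E * (1 / 2 - 1 / r).toReal) :
    ∃ C : ℝ≥0∞, C ≠ ∞ ∧ ∀ t : ℝ, 0 < t → ∀ I ⊆ Icc 0 (t / 2), ∀ s ∈ I, s ≠ 0 → ∀ u : ℝ → E → ℂ,
      AEStronglyMeasurable (u s) →
        eLpNorm (schrod (Module.finrank ℝ E) (t - s) (nonlin a (u s))) r volume ≤
          C * ENNReal.ofReal (t ^ (-γ)) *
            (⨆ s ∈ I, ENNReal.ofReal (s ^ γ) * eLpNorm (u s) r volume) *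
            (ENNReal.ofReal (s ^ (-γ)) * eLpNorm (u s) q volume ^ a) := by
  obtain ⟨C, hC, hfixed⟩ := exists_eLpNorm_schrod_nonlin_le E ha hr hq
  refine ⟨C, hC, fun t ht I hI s hs hs0 u hu => ?_⟩
  obtain ⟨hs_nonneg, hst⟩ := hI hs
  have hγ0 : 0 ≤ γ := hγ ▸ by positivity
  have hspos : 0 < s := hs_nonneg.lt_of_ne' hs0
  rw [← hγ] at hfixed
  calc eLpNorm (schrod (Module.finrank ℝ E) (t - s) (nonlin a (u s))) r volume
      ≤ C * ENNReal.ofReal ((4 * π * |t - s|) ^ (-γ)) *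
          (eLpNorm (u s) q volume ^ a * eLpNorm (u s) r volume) :=
        hfixed (t - s) (by linarith) (u s) hu
    _ ≤ C * ENNReal.ofReal (t ^ (-γ)) * (eLpNorm (u s) q volume ^ a *
          (ENNReal.ofReal (s ^ (-γ)) *
            ⨆ s ∈ I, ENNReal.ofReal (s ^ γ) * eLpNorm (u s) r volume)) := by
        gcongr C * ENNReal.ofReal ?_ * (_ * ?_)
        · exact rpow_neg_four_pi_mul_abs_sub_le ht hst hγ0
        · exact le_ofReal_rpow_neg_mul_iSup (fun s => eLpNorm (u s) r volume) γ hs hspos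
    _ = _ := by ring

theorem early_time_duhamel_1d_general {a : ℝ} (ha : 0 < a) {r p q : ℝ≥0∞} (hr : 2 < r)
    (hq : ENNReal.ofReal a / q + 2 / r = 1) {γ : ℝ}
    (hγ : γ = Module.finrank ℝ E * (1 / 2 - 1 / r).toReal) (hγ1 : γ < 1)
    (hp : a * p⁻¹.toReal = 1 - γ) :
    ∃ C : ℝ, 0 < C ∧ ∀ t : ℝ, 0 < t → ∀ I : Set ℝ, MeasurableSet I → I ⊆ Icc 0 (t / 2) →
      ∀ u : ℝ → E → ℂ, Measurable u.uncurry →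
        eLpNorm (fun x => ∫ s in I, schrod (Module.finrank ℝ E) (t - s) (nonlin a (u s)) x) r
            volume ≤
          ENNReal.ofReal (C * t ^ (-γ)) *
            (⨆ s ∈ I, ENNReal.ofReal (s ^ γ) * eLpNorm (u s) r volume) *
            lorentzMixedNorm volume I p (ENNReal.ofReal a) q u ^ a := by
  obtain ⟨C, hC, hslice⟩ := exists_eLpNorm_schrod_sub_nonlin_le E ha hr.le hq hγ
  refine ⟨C.toReal + 1, by positivity, fun t ht I hI hIt u hu => ?_⟩
  have hγ0 : 0 ≤ γ := hγ ▸ by positivity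
  have hq_top : q ≠ ∞ := by
    rintro rfl
    rw [ENNReal.div_top, zero_add] at hq
    exact (ENNReal.div_lt_of_lt_mul (by rwa [one_mul])).ne hq
  have hCt : C * ENNReal.ofReal (t ^ (-γ)) ≤ ENNReal.ofReal ((C.toReal + 1) * t ^ (-γ)) := by
    rw [ENNReal.ofReal_mul (by positivity)]
    gcongr
    exact ENNReal.le_ofReal_iff_toReal_le hC (by positivity) |>.2 (by linarith)
  have hnonlin : Measurable (fun s => nonlin a (u s)).uncurry := measurable_nonlin hu
  have hg : Measurable fun s => eLpNorm (u s) q volume := measurable_eLpNorm_of_uncurry hu hq_top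
  set S := ⨆ s ∈ I, ENNReal.ofReal (s ^ γ) * eLpNorm (u s) r volume
  calc eLpNorm (fun x => ∫ s in I, schrod (Module.finrank ℝ E) (t - s) (nonlin a (u s)) x) r volume
      ≤ ∫⁻ s in I, C * ENNReal.ofReal (t ^ (-γ)) * S *
          (ENNReal.ofReal (s ^ (-γ)) * eLpNorm (u s) q volume ^ a) := by
        refine eLpNorm_integral_le (measurable_uncurry_schrod _ (by fun_prop) hnonlin)
          (by fun_prop) (ENNReal.one_lt_two.trans hr).le ?_
        filter_upwards [ae_restrict_mem hI, ae_restrict_of_ae (Measure.ae_ne volume 0)]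
          with s hs hs0
        exact hslice t ht I hIt s hs hs0 u hu.of_uncurry_left.aestronglyMeasurable
    _ = C * ENNReal.ofReal (t ^ (-γ)) * S *
          ∫⁻ s in I, ENNReal.ofReal (s ^ (-γ)) * eLpNorm (u s) q volume ^ a :=
        lintegral_const_mul _ (by fun_prop)
    _ ≤ ENNReal.ofReal ((C.toReal + 1) * t ^ (-γ)) * S *
          lorentzMixedNorm volume I p (ENNReal.ofReal a) q u ^ a := by
        gcongr
        exact setLIntegral_rpow_neg_mul_le_lorentzNorm_rpow hI
          (hIt.trans Icc_subset_Ici_self) hg hγ0 hγ1 ha hp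

end Duhamel

section Exponents

theorem toReal_half_sub_one_div_lt_one {r : ℝ≥0∞} (hr : 2 ≤ r) : (1 / 2 - 1 / r).toReal < 1 := by
  rw [toReal_half_sub_one_div hr]
  linarith [r⁻¹.toReal_nonneg]

theorem ofReal_four_div_add_two_div {r : ℝ≥0∞} (hr : 2 ≤ r) :
    ENNReal.ofReal 4 / (1 / 4 - 1 / (2 * r))⁻¹ + 2 / r = 1 := by
  have h : 4 * (1 / (2 * r)) = 2 / r := by
    rw [show (4 : ℝ≥0∞) = 2 * 2 by norm_num, one_div, ENNReal.mul_inv (by simp) (by simp),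
      mul_assoc, ← mul_assoc 2 2⁻¹, ENNReal.mul_inv_cancel (by simp) (by simp), one_mul,
      div_eq_mul_inv]
  rw [ENNReal.ofReal_ofNat, div_eq_mul_inv, inv_inv, ENNReal.mul_sub (by simp), h,
    ENNReal.mul_div_cancel (by simp) (by simp)]
  exact tsub_add_cancel_of_le (ENNReal.div_le_of_le_mul (by simpa using hr))

theorem four_mul_toReal_eq_one_sub {r : ℝ≥0∞} (hr : 2 ≤ r) :
    4 * (1 / 8 + 1 / (4 * r))⁻¹⁻¹.toReal = 1 - (1 / 2 - 1 / r).toReal := by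
  have hr0 : r ≠ 0 := (zero_lt_two.trans_le hr).ne'
  rw [toReal_half_sub_one_div hr, inv_inv, ENNReal.toReal_add (by simp) (by simpa using hr0)]
  simp only [one_div, ENNReal.toReal_inv, ENNReal.toReal_ofNat, ENNReal.toReal_mul, mul_inv_rev]
  ring

end Exponents

/-- **One-dimensional early-time Duhamel estimate.**  Fix `2 < r ≤ ∞`.  For any `t > 0`, any
measurable interval `I ⊆ [0, t/2]`, and any measurable `u` on `I × ℝ`,
`‖∫_I e^{i(t-s)Δ}(|u|⁴u)(s) ds‖_{L^r_x} ≤ C t^{-(1/2-1/r)}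
  (sup_{s∈I} s^{1/2-1/r} ‖u(s)‖_{L^r_x}) ‖u‖⁴_{L^{8r/(r+2),4}_s L^{4r/(r-2)}_x(I×ℝ)}`,
with `C = C(r)`.  The exponents are encoded via their reciprocals `(r+2)/(8r) = 1/8 + 1/(4r)`
and `(r-2)/(4r) = 1/4 - 1/(2r)`, which for `r = ∞` give `8` and `4` respectively. -/
theorem early_time_duhamel_1d (r : ℝ≥0∞) (hr : 2 < r) :
    ∃ C : ℝ, 0 < C ∧
      ∀ t : ℝ, 0 < t →
        ∀ I : Set ℝ, MeasurableSet I → I.OrdConnected → I ⊆ Set.Icc 0 (t / 2) →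
          ∀ u : ℝ → ℝ → ℂ, Measurable (Function.uncurry u) →
            eLpNorm (fun x => ∫ s in I, schrod 1 (t - s) (nonlin 4 (u s)) x) r volume ≤
              ENNReal.ofReal (C * t ^ (-(1 / 2 - 1 / r).toReal)) *
                (⨆ s ∈ I, ENNReal.ofReal (s ^ (1 / 2 - 1 / r).toReal) *
                  eLpNorm (u s) r volume) *
                lorentzMixedNorm volume I (1 / 8 + 1 / (4 * r))⁻¹ 4
                    (1 / 4 - 1 / (2 * r))⁻¹ u ^ 4 := by
  obtain ⟨C, hC, h⟩ := early_time_duhamel_1d_general ℝ four_pos hr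
    (ofReal_four_div_add_two_div hr.le) (by simp) (toReal_half_sub_one_div_lt_one hr.le)
    (four_mul_toReal_eq_one_sub hr.le)
  refine ⟨C, hC, fun t ht I hI _ hIt u hu => ?_⟩
  simpa only [Module.finrank_self, ENNReal.ofReal_ofNat, ENNReal.rpow_ofNat] using
    h t ht I hI hIt u hu
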